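/- arXiv:math/0406339 — 2 statements merged into one kernel-verified Lean document; each statement's English description precedes it below -/
import Mathlib

section
/- Let A be a complex r×E matrix of full row rank r, with columns indexed by the finite set E. Then the polynomial ∑_{S ⊆ E, |S| = r} |det A[S]|² · ∏_{e∈S} y_e (where A[S] is the square submatrix of A on the columns S) has the half-plane property: it is nonzero whenever y : E → ℂ satisfies Re(y_e) > 0 for all e ∈ E. Equivalently, if Y = diag(y_e : e ∈ E) with Re(y_e) > 0 for all e, then the r×r matrix A Y A* is nonsingular, where A* is the conjugate transpose of A. -/
open scoped BigOperators
open Classical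

noncomputable section

/-- The determinant of the square submatrix of the `r × E` matrix `A` on an `r`-element
set `S` of columns (with respect to a fixed enumeration of `S`; it is well defined up to
sign, so its squared absolute value is canonical).  Defined as `0` when `|S| ≠ r`. -/
noncomputable def subDet {r : ℕ} {E : Type*} (A : Matrix (Fin r) E ℂ) (S : Finset E) : ℂ :=
  if h : S.card = r then
    (A.submatrix id (fun i : Fin r => ((S.equivFin.symm (Fin.cast h.symm i) : ↥S) : E))).det
  else 0

/-!
If `M + Mᴴ` is positive definite, then `M` is nonsingular, because `M *ᵥ v = 0` makes the quadratic
form of `M + Mᴴ` vanish at `v`. For `M = A * diagonal y * Aᴴ` we have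
`M + Mᴴ = A * diagonal (y + star y) * Aᴴ`, which is positive definite when `A` has full row rank and
every `y e` has positive real part. The Cauchy–Binet formula identifies `det M` with the polynomial:
expanding `det (M * N)` over all column selections, only the injective ones contribute, and each of
them is uniquely a permutation followed by the chosen enumeration of its image.
-/

section CauchyBinet

open Matrix Equiv

variable {m n R : Type*} [Fintype m]

lemma bijective_embedding_of_powersetCard_perm
    (e : ∀ S : Set.powersetCard n (Fintype.card m), m ≃ S) :
    Function.Bijective fun p : Set.powersetCard n (Fintype.card m) × Perm m ↦
      (p.2.trans (e p.1)).toEmbedding.trans (.subtype (· ∈ p.1)) := by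
  constructor
  · rintro ⟨S, σ⟩ ⟨T, τ⟩ h
    have apply_eq (i : m) : (e S (σ i) : n) = e T (τ i) := DFunLike.congr_fun h i
    obtain rfl : S = T := by
      refine Set.powersetCard.eq_iff_subset.2 fun x hx ↦ ?_
      obtain ⟨i, hi⟩ := (σ.trans (e S)).surjective ⟨x, hx⟩
      have hx_eq : x = e T (τ i) := (congrArg Subtype.val hi).symm.trans (apply_eq i)
      exact hx_eq ▸ (e T (τ i)).2
    exact Prod.ext rfl (Equiv.ext fun i ↦ (e S).injective (Subtype.ext (apply_eq i)))
  · intro f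
    let S : Set.powersetCard n (Fintype.card m) := ⟨Finset.univ.map f, Finset.card_map f⟩
    have f_mem (i : m) : f i ∈ S := Finset.mem_map_of_mem f (Finset.mem_univ i)
    let σ : m → m := fun i ↦ (e S).symm ⟨f i, f_mem i⟩
    have hσ : Function.Injective σ := fun i j hij ↦
      f.injective (congrArg Subtype.val ((e S).symm.injective hij))
    exact ⟨(S, .ofBijective σ (Finite.injective_iff_bijective.1 hσ)),
      Function.Embedding.ext fun i ↦ congrArg Subtype.val ((e S).apply_symm_apply _)⟩

variable [DecidableEq m] [CommRing R]

lemma det_mul_eq_sum_fun [Fintype n] (M : Matrix m n R) (N : Matrix n m R) :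
    (M * N).det = ∑ f : m → n, (M.submatrix id f).det * ∏ i, N (f i) i := by
  have transpose_eq : (M * N)ᵀ = fun i ↦ ∑ k, N k i • Mᵀ k := by
    ext i j
    simp only [transpose_apply, mul_apply, Finset.sum_apply, Pi.smul_apply, smul_eq_mul, mul_comm]
  calc (M * N).det = detRowAlternating fun i ↦ ∑ k, N k i • Mᵀ k := by
        rw [← det_transpose, transpose_eq]; rfl
    _ = ∑ f : m → n, detRowAlternating fun i ↦ N (f i) i • Mᵀ (f i) :=
        detRowAlternating.toMultilinearMap.map_sum _
    _ = ∑ f : m → n, (∏ i, N (f i) i) • detRowAlternating fun i ↦ Mᵀ (f i) :=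
        Fintype.sum_congr _ _ fun f ↦ detRowAlternating.toMultilinearMap.map_smul_univ _ _
    _ = ∑ f : m → n, (M.submatrix id f).det * ∏ i, N (f i) i := by
        refine Fintype.sum_congr _ _ fun f ↦ ?_
        rw [smul_eq_mul, mul_comm, ← det_transpose (M.submatrix id f)]
        rfl

lemma det_mul_eq_sum_embedding [Fintype n] (M : Matrix m n R) (N : Matrix n m R) :
    (M * N).det = ∑ f : m ↪ n, (M.submatrix id f).det * ∏ i, N (f i) i := by
  rw [det_mul_eq_sum_fun]
  refine (Fintype.sum_of_injective _ DFunLike.coe_injective _ _ (fun f hf ↦ ?_) fun _ ↦ rfl).symm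
  obtain ⟨i, j, hij, hne⟩ : ∃ i j, f i = f j ∧ i ≠ j := by
    by_contra! hinj
    exact hf ⟨⟨f, fun i j ↦ hinj i j⟩, rfl⟩
  rw [det_zero_of_column_eq hne fun k ↦ congrArg (M k) hij, zero_mul]

lemma sum_perm_det_submatrix_mul_prod (M : Matrix m n R) (N : Matrix n m R) (g : m → n) :
    ∑ σ : Perm m, (M.submatrix id (g ∘ σ)).det * ∏ i, N (g (σ i)) i =
      (M.submatrix id g).det * (N.submatrix g id).det := by
  rw [det_apply' (N.submatrix g id), Finset.mul_sum]
  refine Fintype.sum_congr _ _ fun σ ↦ ?_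
  have det_eq : (M.submatrix id (g ∘ σ)).det = Perm.sign σ * (M.submatrix id g).det :=
    det_permute' σ (M.submatrix id g)
  simp only [det_eq, submatrix_apply, id]
  ring

theorem det_mul_eq_sum_powersetCard [Fintype n] (M : Matrix m n R) (N : Matrix n m R)
    (e : ∀ S : Set.powersetCard n (Fintype.card m), m ≃ S) :
    (M * N).det = ∑ S, (M.submatrix id fun i ↦ (e S i : n)).det *
      (N.submatrix (fun i ↦ (e S i : n)) id).det := by
  rw [det_mul_eq_sum_embedding,
    ← (bijective_embedding_of_powersetCard_perm e).sum_comp, Fintype.sum_prod_type]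
  exact Fintype.sum_congr _ _ fun S ↦ sum_perm_det_submatrix_mul_prod M N fun i ↦ e S i

theorem det_mul_diagonal_mul_eq_sum_powersetCard [Fintype n] [DecidableEq n]
    (M : Matrix m n R) (y : n → R) (N : Matrix n m R)
    (e : ∀ S : Set.powersetCard n (Fintype.card m), m ≃ S) :
    (M * diagonal y * N).det = ∑ S, (M.submatrix id fun i ↦ (e S i : n)).det *
      (N.submatrix (fun i ↦ (e S i : n)) id).det * ∏ k ∈ S.1, y k := by
  rw [det_mul_eq_sum_powersetCard _ _ e]
  refine Fintype.sum_congr _ _ fun S ↦ ?_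
  have prod_eq : ∏ i, y (e S i) = ∏ k ∈ S.1, y k :=
    ((e S).prod_comp fun k ↦ y k).trans (Finset.prod_coe_sort S.1 y)
  have submatrix_eq : (M * diagonal y).submatrix id (fun i ↦ (e S i : n)) =
      of fun i j ↦ y (e S j) * M.submatrix id (fun i ↦ (e S i : n)) i j := by
    ext i j
    simp only [submatrix_apply, mul_diagonal, of_apply, id, mul_comm]
  rw [submatrix_eq, det_mul_row, prod_eq]
  ring

end CauchyBinet

section SubDet

open Matrix

variable {r : ℕ} {E : Type*}

/-- The enumeration of an `r`-element set of columns used by `subDet`. The cardinality is written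
`Fintype.card (Fin r)`, as in `det_mul_eq_sum_powersetCard`, which sums over these sets. -/
def columnEquiv (S : Set.powersetCard E (Fintype.card (Fin r))) : Fin r ≃ S :=
  (finCongr (S.2.trans (Fintype.card_fin r)).symm).trans S.1.equivFin.symm

lemma subDet_eq_det_submatrix_columnEquiv (A : Matrix (Fin r) E ℂ)
    (S : Set.powersetCard E (Fintype.card (Fin r))) :
    subDet A S = (A.submatrix id fun i ↦ (columnEquiv S i : E)).det :=
  dif_pos (S.2.trans (Fintype.card_fin r))

theorem det_mul_diagonal_mul_conjTranspose_eq_sum_subDet [Fintype E]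
    (A : Matrix (Fin r) E ℂ) (y : E → ℂ) :
    (A * diagonal y * Aᴴ).det =
      ∑ S ∈ Finset.univ.powerset.filter (fun S : Finset E ↦ S.card = r),
        (Complex.normSq (subDet A S) : ℂ) * ∏ e ∈ S, y e := by
  rw [det_mul_diagonal_mul_eq_sum_powersetCard A y Aᴴ columnEquiv,
    Finset.sum_subtype (p := (· ∈ Set.powersetCard E (Fintype.card (Fin r)))) _ (by simp)]
  refine Fintype.sum_congr _ _ fun S ↦ ?_
  rw [← conjTranspose_submatrix, det_conjTranspose, ← subDet_eq_det_submatrix_columnEquiv,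
    ← starRingEnd_apply, Complex.mul_conj]

end SubDet

section HalfPlane

open Matrix

variable {m n R : Type*} [Fintype m] [Fintype n]

lemma vecMul_injective_iff_rank_eq_card {K : Type*} [Field K] (A : Matrix m n K) :
    Function.Injective A.vecMul ↔ A.rank = Fintype.card m := by
  rw [vecMul_injective_iff, linearIndependent_iff_card_eq_finrank_span, Set.finrank,
    ← rank_eq_finrank_span_row, eq_comm]

variable [CommRing R] [PartialOrder R] [StarRing R]

lemma det_ne_zero_of_posDef_add_conjTranspose [IsDomain R] [DecidableEq m] {M : Matrix m m R}
    (hM : (M + Mᴴ).PosDef) : M.det ≠ 0 := by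
  intro hdet
  obtain ⟨v, hv, hMv⟩ := exists_mulVec_eq_zero_iff.2 hdet
  have form_eq_zero : star v ⬝ᵥ ((M + Mᴴ) *ᵥ v) = 0 := by
    rw [add_mulVec, hMv, zero_add, dotProduct_mulVec, ← star_mulVec, hMv, star_zero,
      zero_dotProduct]
  exact (hM.dotProduct_mulVec_pos hv).ne' form_eq_zero

lemma posDef_mul_diagonal_mul_conjTranspose_add_conjTranspose [StarOrderedRing R]
    [NoZeroDivisors R] [DecidableEq n] {A : Matrix m n R} (hA : Function.Injective A.vecMul)
    {y : n → R} (hy : ∀ i, 0 < y i + star (y i)) :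
    (A * diagonal y * Aᴴ + (A * diagonal y * Aᴴ)ᴴ).PosDef := by
  have add_eq : A * diagonal y * Aᴴ + (A * diagonal y * Aᴴ)ᴴ =
      A * diagonal (fun i ↦ y i + star (y i)) * Aᴴ := by
    rw [conjTranspose_mul, conjTranspose_mul, conjTranspose_conjTranspose,
      diagonal_conjTranspose, ← Matrix.mul_assoc, ← Matrix.add_mul, ← Matrix.mul_add, diagonal_add]
    rfl
  exact add_eq ▸ (PosDef.diagonal hy).mul_mul_conjTranspose_same hA

open scoped ComplexOrder in
theorem det_mul_diagonal_mul_conjTranspose_ne_zero {𝕜 : Type*} [RCLike 𝕜] [DecidableEq m]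
    [DecidableEq n] (A : Matrix m n 𝕜) (hrank : A.rank = Fintype.card m) {y : n → 𝕜}
    (hy : ∀ i, 0 < RCLike.re (y i)) : (A * diagonal y * Aᴴ).det ≠ 0 := by
  have add_star_pos (i : n) : 0 < y i + star (y i) := by
    rw [← starRingEnd_apply, RCLike.add_conj]
    exact mul_pos two_pos (RCLike.ofReal_pos.2 (hy i))
  exact det_ne_zero_of_posDef_add_conjTranspose
    (posDef_mul_diagonal_mul_conjTranspose_add_conjTranspose
      ((vecMul_injective_iff_rank_eq_card A).2 hrank) add_star_pos)

end HalfPlane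

/-- For a complex `r × E` matrix `A` of full row rank `r`, the polynomial
`∑_{|S| = r} |det A[S]|² ∏_{e ∈ S} y_e` has the half-plane property; equivalently,
`A Y A*` is nonsingular whenever `Y = diag(y)` with every `Re(y_e) > 0`. -/
theorem det_AYAstar_half_plane_property {r : ℕ} {E : Type*} [Fintype E]
    (A : Matrix (Fin r) E ℂ) (hrank : A.rank = r)
    (y : E → ℂ) (hy : ∀ e, 0 < (y e).re) :
    (∑ S ∈ Finset.univ.powerset.filter (fun S : Finset E => S.card = r),
        (Complex.normSq (subDet A S) : ℂ) * ∏ e ∈ S, y e) ≠ 0 ∧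
    (A * Matrix.diagonal y * A.conjTranspose).det ≠ 0 := by
  have hdet := det_mul_diagonal_mul_conjTranspose_ne_zero A
    (hrank.trans (Fintype.card_fin r).symm) hy
  exact ⟨det_mul_diagonal_mul_conjTranspose_eq_sum_subDet A y ▸ hdet, hdet⟩
end
end

section
/- Let P be a polynomial in the complex variables y = {y_e : e ∈ E}, fix e ∈ E, and write P = ∑_{j=0}^{n} P_j({y_f : f ≠ e}) · y_e^j, where each P_j is a polynomial in the remaining variables. If P has the half-plane property, then for each 0 ≤ j ≤ n the coefficient polynomial P_j is either identically zero or has the half-plane property. -/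
open scoped BigOperators
open Classical

noncomputable section

/-- A multivariate complex polynomial has the half-plane property if it is nonvanishing
whenever every variable has strictly positive real part. -/
def HPPpoly {E : Type*} (P : MvPolynomial E ℂ) : Prop :=
  ∀ y : E → ℂ, (∀ e, 0 < (y e).re) → MvPolynomial.eval y P ≠ 0

/-!
Treat `y_e` as a separate variable `z`, so that `P = ∑ P_j z ^ j`. For `0 < re t`, the operator
`t + d/dz` preserves nonvanishing on the right half-plane: there `q' / q = ∑ 1 / (z - a)`, over the
roots `a` of `q`, has nonnegative real part, hence differs from `-t`. Applying it `j` times and then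
setting `z = t` gives a polynomial in `t` and the other variables which does not vanish when all of
them have positive real part, and whose value at `t = 0` is `j! P_j`.

The limit `t → 0` is controlled by a Harnack inequality: a univariate polynomial of degree at
most `m` without roots in the disc of radius `r` satisfies `|q(1)| ≤ (1 + 1 / r) ^ m |q(0)|`.
Applied on complex lines along which only finitely many variables move, it shows that a zero of the
limit in the product of half-planes forces the limit to vanish identically.
-/

open Filter Topology Polynomial

lemma norm_eval_le_of_forall_le_norm_roots {K : Type*} [NormedField K] {q : K[X]}
    (hq : q.Splits) {r : ℝ} (hr : 0 < r) (hroots : ∀ a ∈ q.roots, r ≤ ‖a‖) (w : K) :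
    ‖q.eval w‖ ≤ (1 + ‖w‖ / r) ^ q.natDegree * ‖q.eval 0‖ := by
  have norm_eval (x : K) :
      ‖q.eval x‖ = ‖q.leadingCoeff‖ * (q.roots.map fun a ↦ ‖x - a‖).prod := by
    have hprod := map_multiset_prod (normHom : K →*₀ ℝ) (q.roots.map (x - ·))
    rw [Multiset.map_map] at hprod
    rw [hq.eval_eq_prod_roots, norm_mul]
    exact congrArg (‖q.leadingCoeff‖ * ·) hprod
  have norm_sub_le_mul (a : K) (ha : a ∈ q.roots) : ‖w - a‖ ≤ (1 + ‖w‖ / r) * ‖0 - a‖ := by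
    calc ‖w - a‖ ≤ ‖w‖ / r * r + ‖a‖ := by
          rw [div_mul_cancel₀ _ hr.ne']
          exact norm_sub_le w a
      _ ≤ ‖w‖ / r * ‖a‖ + ‖a‖ := by
          gcongr
          exact hroots a ha
      _ = (1 + ‖w‖ / r) * ‖0 - a‖ := by
          rw [zero_sub, norm_neg]
          ring
  calc ‖q.eval w‖ = ‖q.leadingCoeff‖ * (q.roots.map fun a ↦ ‖w - a‖).prod := norm_eval w
    _ ≤ ‖q.leadingCoeff‖ * (q.roots.map fun a ↦ (1 + ‖w‖ / r) * ‖0 - a‖).prod := by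
        gcongr
        exact Multiset.prod_map_le_prod_map₀ _ _ (fun _ _ ↦ norm_nonneg _) norm_sub_le_mul
    _ = (1 + ‖w‖ / r) ^ q.natDegree * ‖q.eval 0‖ := by
        rw [Multiset.prod_map_mul, Multiset.map_const', Multiset.prod_replicate,
          ← hq.natDegree_eq_card_roots, norm_eval]
        ring

lemma re_eval_derivative_div_eval_nonneg {q : ℂ[X]} (hq : ∀ z : ℂ, 0 < z.re → q.eval z ≠ 0)
    {z : ℂ} (hz : 0 < z.re) : 0 ≤ (q.derivative.eval z / q.eval z).re := by
  rw [(IsAlgClosed.splits q).eval_derivative_div_eval_of_ne_zero (hq z hz),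
    ← Complex.coe_reAddGroupHom, map_multiset_sum, Multiset.map_map]
  refine Multiset.sum_nonneg (Multiset.forall_mem_map_iff.mpr fun a ha ↦ ?_)
  have ha_re : a.re ≤ 0 := not_lt.mp fun h ↦ hq a h (isRoot_of_mem_roots ha)
  have hza : 0 ≤ (z - a).re := by
    rw [Complex.sub_re]
    linarith
  simpa [Complex.inv_re] using div_nonneg hza (Complex.normSq_nonneg (z - a))

lemma eval_derivative_add_smul_ne_zero {q : ℂ[X]} (hq : ∀ z : ℂ, 0 < z.re → q.eval z ≠ 0)
    {t : ℂ} (ht : 0 < t.re) {z : ℂ} (hz : 0 < z.re) : (q.derivative + t • q).eval z ≠ 0 := by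
  intro hzero
  have hquot : q.derivative.eval z / q.eval z = -t := by
    rw [div_eq_iff (hq z hz)]
    rw [eval_add, eval_smul, smul_eq_mul] at hzero
    linear_combination hzero
  have hre := re_eval_derivative_div_eval_nonneg hq hz
  rw [hquot, Complex.neg_re] at hre
  linarith

lemma eval_derivative_add_smul_pow_ne_zero {q : ℂ[X]}
    (hq : ∀ z : ℂ, 0 < z.re → q.eval z ≠ 0) {t : ℂ} (ht : 0 < t.re) (j : ℕ) :
    ∀ z : ℂ, 0 < z.re → (((derivative + t • 1 : Module.End ℂ ℂ[X]) ^ j) q).eval z ≠ 0 := by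
  induction j with
  | zero => simpa using hq
  | succ j ih =>
    intro z hz
    rw [pow_succ', Module.End.mul_apply]
    exact eval_derivative_add_smul_ne_zero ih ht hz

section DiagonalDerivative

variable {R S : Type*} [CommSemiring R] [CommSemiring S]

/-- The polynomial whose value at `t` is the value at `t` of `(d/dX + t) ^ j p`, where `t` counts as
a constant when differentiating. It deforms the iterated derivative `d^j p / dX^j`, whose value at
`0` it shares. -/
def diagonalDerivative (j : ℕ) (p : R[X]) : R[X] :=
  ∑ m ∈ Finset.range (j + 1), j.choose m • (X ^ (j - m) * derivative^[m] p)

lemma eval_diagonalDerivative (j : ℕ) (p : R[X]) (t : R) :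
    (diagonalDerivative j p).eval t =
      (((derivative + t • 1 : Module.End R R[X]) ^ j) p).eval t := by
  have hcomm : Commute (derivative : Module.End R R[X]) (t • 1) :=
    (Commute.one_right _).smul_right t
  rw [hcomm.add_pow, LinearMap.sum_apply, diagonalDerivative, eval_finsetSum, eval_finsetSum]
  refine Finset.sum_congr rfl fun m _ ↦ ?_
  simp [_root_.smul_pow, Module.End.pow_apply, mul_left_comm]

lemma map_diagonalDerivative (f : R →+* S) (j : ℕ) (p : R[X]) :
    (diagonalDerivative j p).map f = diagonalDerivative j (p.map f) := by
  simp [diagonalDerivative, Polynomial.map_sum, iterate_derivative_map]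

lemma coeff_zero_diagonalDerivative (j : ℕ) (p : R[X]) :
    (diagonalDerivative j p).coeff 0 = j.factorial • p.coeff j := by
  rw [diagonalDerivative, finsetSum_coeff, Finset.sum_eq_single_of_mem j (by simp)]
  · simp [coeff_iterate_derivative, Nat.descFactorial_self]
  · intro m hm hmj
    have hexp : j - m ≠ 0 := by grind
    simp [mul_coeff_zero, coeff_X_pow, hexp.symm]

end DiagonalDerivative

section LineRestriction

variable {E R : Type*} [CommRing R]

/-- The restriction of `Q` to the affine line through `y` and `w`, parametrized so that `y` is
at `0` and `w` is at `1`. -/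
def lineRestriction (y w : E → R) (Q : MvPolynomial E R) : R[X] :=
  MvPolynomial.aeval (fun e ↦ C (w e - y e) * X + C (y e)) Q

lemma eval_lineRestriction (y w : E → R) (Q : MvPolynomial E R) (s : R) :
    (lineRestriction y w Q).eval s = MvPolynomial.eval (AffineMap.lineMap y w s) Q := by
  rw [lineRestriction, ← coe_aeval_eq_eval, ← AlgHom.comp_apply, MvPolynomial.comp_aeval,
    ← MvPolynomial.coe_aeval_eq_eval]
  refine congrArg (fun v : E → R ↦ MvPolynomial.aeval v Q) (funext fun e ↦ ?_)
  simp [AffineMap.lineMap_apply, mul_comm]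

lemma natDegree_lineRestriction_le (y w : E → R) (Q : MvPolynomial E R) :
    (lineRestriction y w Q).natDegree ≤ Q.totalDegree := by
  rw [← mul_one Q.totalDegree]
  exact MvPolynomial.aeval_natDegree_le Q le_rfl _ fun _ ↦ natDegree_linear_le

end LineRestriction

section Harnack

variable {E : Type*}

lemma eventually_lineMap_re_pos {y w : E → ℂ} (hy : ∀ e, 0 < (y e).re)
    (hyw : {e | w e ≠ y e}.Finite) :
    ∀ᶠ s : ℂ in 𝓝 0, ∀ e, 0 < (AffineMap.lineMap y w s e).re := by
  have on_support : ∀ᶠ s : ℂ in 𝓝 0, ∀ e ∈ {e | w e ≠ y e},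
      0 < (AffineMap.lineMap y w s e).re := by
    refine (eventually_all_finite hyw).mpr fun e _ ↦ ?_
    have hcont : Continuous fun s : ℂ ↦ (AffineMap.lineMap y w s e).re := by
      simp only [AffineMap.pi_lineMap_apply, AffineMap.lineMap_apply, vsub_eq_sub, vadd_eq_add]
      fun_prop
    exact hcont.continuousAt.eventually (lt_mem_nhds (by simpa using hy e))
  filter_upwards [on_support] with s hs e
  by_cases he : w e = y e
  · simpa [AffineMap.lineMap_apply, he] using hy e
  · exact hs e he

lemma HPPpoly.exists_norm_eval_le_mul_norm_eval {y w : E → ℂ} (hy : ∀ e, 0 < (y e).re)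
    (hyw : {e | w e ≠ y e}.Finite) (m : ℕ) :
    ∃ K : ℝ, ∀ Q : MvPolynomial E ℂ, Q.totalDegree ≤ m → HPPpoly Q →
      ‖MvPolynomial.eval w Q‖ ≤ K * ‖MvPolynomial.eval y Q‖ := by
  obtain ⟨r, hr, hball⟩ := Metric.eventually_nhds_iff.mp (eventually_lineMap_re_pos hy hyw)
  refine ⟨(1 + 1 / r) ^ m, fun Q hQm hQ ↦ ?_⟩
  set q := lineRestriction y w Q
  have hroots (a : ℂ) (ha : a ∈ q.roots) : r ≤ ‖a‖ := by
    by_contra! har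
    apply hQ _ (hball (by simpa using har))
    rw [← eval_lineRestriction]
    exact isRoot_of_mem_roots ha
  calc ‖MvPolynomial.eval w Q‖ = ‖q.eval 1‖ := by
        rw [eval_lineRestriction, AffineMap.lineMap_apply_one]
    _ ≤ (1 + 1 / r) ^ q.natDegree * ‖q.eval 0‖ := by
        simpa using norm_eval_le_of_forall_le_norm_roots (IsAlgClosed.splits q) hr hroots 1
    _ ≤ (1 + 1 / r) ^ m * ‖q.eval 0‖ := by
        gcongr
        · linarith [one_div_pos.mpr hr]
        · exact (natDegree_lineRestriction_le y w Q).trans hQm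
    _ = (1 + 1 / r) ^ m * ‖MvPolynomial.eval y Q‖ := by
        rw [eval_lineRestriction, AffineMap.lineMap_apply_zero]

lemma eq_zero_of_forall_finite_ne_eval_eq_zero {R : Type*} [CommRing R] [IsDomain R] [Infinite R]
    {Q : MvPolynomial E R} (y : E → R)
    (h : ∀ w : E → R, {e | w e ≠ y e}.Finite → MvPolynomial.eval w Q = 0) : Q = 0 := by
  refine MvPolynomial.funext fun w ↦ ?_
  let w' : E → R := fun e ↦ if e ∈ Q.vars then w e else y e
  have hfin : {e | w' e ≠ y e}.Finite :=
    Q.vars.finite_toSet.subset fun e he ↦ by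
      by_contra hvars
      exact he (if_neg hvars)
  have hagree : MvPolynomial.eval w Q = MvPolynomial.eval w' Q :=
    MvPolynomial.eval₂Hom_congr' rfl (fun e he _ ↦ (if_pos he).symm) rfl
  rw [hagree, h w' hfin, map_zero]

end Harnack

section EvalC

variable {E R : Type*} [CommSemiring R]

lemma eval_eval_C (p : (MvPolynomial E R)[X]) (y : E → R) (t : R) :
    MvPolynomial.eval y (p.eval (MvPolynomial.C t)) = (p.map (MvPolynomial.eval y)).eval t := by
  rw [eval_map, ← eval₂_at_apply, MvPolynomial.eval_C]

lemma totalDegree_eval_C_le (p : (MvPolynomial E R)[X]) (t : R) :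
    (p.eval (MvPolynomial.C t)).totalDegree ≤
      (Finset.range (p.natDegree + 1)).sup fun i ↦ (p.coeff i).totalDegree := by
  rw [eval_eq_sum_range]
  refine MvPolynomial.totalDegree_finsetSum_le fun i hi ↦ ?_
  calc (p.coeff i * MvPolynomial.C t ^ i).totalDegree
      ≤ (p.coeff i).totalDegree + (MvPolynomial.C t ^ i : MvPolynomial E R).totalDegree :=
        MvPolynomial.totalDegree_mul _ _
    _ = (p.coeff i).totalDegree := by
        rw [← map_pow, MvPolynomial.totalDegree_C, add_zero]
    _ ≤ _ := Finset.le_sup (f := fun i ↦ (p.coeff i).totalDegree) hi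

end EvalC

section JointHPP

variable {E : Type*}

/-- The half-plane property of `p`, regarded as a polynomial in the variables `E` together with
one further variable, that of `p`. -/
def JointHPP (p : (MvPolynomial E ℂ)[X]) : Prop :=
  ∀ y : E → ℂ, (∀ e, 0 < (y e).re) → ∀ z : ℂ, 0 < z.re → (p.map (MvPolynomial.eval y)).eval z ≠ 0

lemma tendsto_eval_eval_C (p : (MvPolynomial E ℂ)[X]) (y : E → ℂ) :
    Tendsto (fun t : ℝ ↦ MvPolynomial.eval y (p.eval (MvPolynomial.C (t : ℂ)))) (𝓝[>] 0)
      (𝓝 (MvPolynomial.eval y (p.coeff 0))) := by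
  have hcont : Continuous fun t : ℝ ↦ (p.map (MvPolynomial.eval y)).eval (t : ℂ) := by fun_prop
  simpa [eval_eval_C, ← coeff_zero_eq_eval_zero] using
    (hcont.tendsto 0).mono_left nhdsWithin_le_nhds

namespace JointHPP

variable {p : (MvPolynomial E ℂ)[X]}

lemma hppPoly_eval_C (hp : JointHPP p) {t : ℂ} (ht : 0 < t.re) :
    HPPpoly (p.eval (MvPolynomial.C t)) := fun y hy ↦ by
  rw [eval_eval_C]
  exact hp y hy t ht

lemma diagonalDerivative (hp : JointHPP p) (j : ℕ) : JointHPP (diagonalDerivative j p) := by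
  intro y hy t ht
  rw [map_diagonalDerivative, eval_diagonalDerivative]
  exact eval_derivative_add_smul_pow_ne_zero (hp y hy) ht j t ht

lemma coeff_zero_eq_zero_or_hppPoly (hp : JointHPP p) : p.coeff 0 = 0 ∨ HPPpoly (p.coeff 0) := by
  refine or_iff_not_imp_right.mpr fun hnot ↦ ?_
  obtain ⟨y, hy, hzero⟩ : ∃ y : E → ℂ, (∀ e, 0 < (y e).re) ∧
      MvPolynomial.eval y (p.coeff 0) = 0 := by
    simpa [HPPpoly] using hnot
  refine eq_zero_of_forall_finite_ne_eval_eq_zero y fun w hw ↦ ?_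
  obtain ⟨K, hK⟩ := HPPpoly.exists_norm_eval_le_mul_norm_eval hy hw
    ((Finset.range (p.natDegree + 1)).sup fun i ↦ (p.coeff i).totalDegree)
  have hle : ‖MvPolynomial.eval w (p.coeff 0)‖ ≤ K * ‖MvPolynomial.eval y (p.coeff 0)‖ := by
    refine le_of_tendsto_of_tendsto (tendsto_eval_eval_C p w).norm
      ((tendsto_eval_eval_C p y).norm.const_mul K) ?_
    filter_upwards [self_mem_nhdsWithin] with t ht
    exact hK _ (totalDegree_eval_C_le p t) (hp.hppPoly_eval_C (by simpa using ht))
  simpa [hzero] using hle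

theorem coeff_eq_zero_or_hppPoly (hp : JointHPP p) (j : ℕ) :
    p.coeff j = 0 ∨ HPPpoly (p.coeff j) := by
  have h := (hp.diagonalDerivative j).coeff_zero_eq_zero_or_hppPoly
  rw [coeff_zero_diagonalDerivative] at h
  refine h.imp (fun h0 ↦ (smul_eq_zero.mp h0).resolve_left j.factorial_ne_zero) fun hj y hy h0 ↦ ?_
  exact hj y hy (by rw [map_nsmul, h0, smul_zero])

end JointHPP

end JointHPP

section Coefficients

variable {E R : Type*} [CommSemiring R]

lemma eval_update_of_degreeOf_eq_zero {Q : MvPolynomial E R} {e : E} (hQ : Q.degreeOf e = 0)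
    (y : E → R) (z : R) :
    MvPolynomial.eval (Function.update y e z) Q = MvPolynomial.eval y Q := by
  refine MvPolynomial.eval₂Hom_congr' rfl (fun f hf _ ↦ Function.update_of_ne ?_ z y) rfl
  rintro rfl
  exact MvPolynomial.mem_vars_iff_degreeOf_ne_zero.mp hf hQ

lemma eval_update_eval_X {p : (MvPolynomial E R)[X]} {e : E}
    (hp : ∀ j, (p.coeff j).degreeOf e = 0) (y : E → R) (z : R) :
    MvPolynomial.eval (Function.update y e z) (p.eval (MvPolynomial.X e)) =
      (p.map (MvPolynomial.eval y)).eval z := by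
  have hmap : p.map (MvPolynomial.eval (Function.update y e z)) = p.map (MvPolynomial.eval y) := by
    ext j
    rw [coeff_map, coeff_map, eval_update_of_degreeOf_eq_zero (hp j)]
  rw [← eval₂_at_apply, ← eval_map, hmap, MvPolynomial.eval_X, Function.update_self]

end Coefficients

lemma HPPpoly.jointHPP {E : Type*} {p : (MvPolynomial E ℂ)[X]} {e : E}
    (hp : ∀ j, (p.coeff j).degreeOf e = 0) (hP : HPPpoly (p.eval (MvPolynomial.X e))) :
    JointHPP p := by
  intro y hy z hz
  rw [← eval_update_eval_X hp]
  refine hP _ fun f ↦ ?_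
  obtain rfl | hf := eq_or_ne f e
  · simpa using hz
  · simpa [hf] using hy f

theorem coefficient_half_plane_property_general {E : Type*}
    (P : MvPolynomial E ℂ) (e : E) (n : ℕ) (Pc : ℕ → MvPolynomial E ℂ)
    (hvars : ∀ j : ℕ, (Pc j).degreeOf e = 0)
    (hdecomp : P = ∑ j ∈ Finset.range (n + 1), Pc j * (MvPolynomial.X e) ^ j)
    (hP : HPPpoly P) :
    ∀ j : ℕ, j ≤ n → Pc j = 0 ∨ HPPpoly (Pc j) := by
  intro j hj
  let p : (MvPolynomial E ℂ)[X] := ∑ i ∈ Finset.range (n + 1), C (Pc i) * X ^ i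
  have hcoeff (i : ℕ) : p.coeff i = if i ≤ n then Pc i else 0 := by
    simp [p, coeff_X_pow]
  have hfree (i : ℕ) : (p.coeff i).degreeOf e = 0 := by
    rw [hcoeff]
    split_ifs
    · exact hvars i
    · exact MvPolynomial.degreeOf_zero e
  have heval : p.eval (MvPolynomial.X e) = P := by
    simp [p, hdecomp, eval_finsetSum]
  have hjoint : JointHPP p := HPPpoly.jointHPP hfree (heval ▸ hP)
  simpa [hcoeff, hj] using hjoint.coeff_eq_zero_or_hppPoly j

/-- Corollary 3.4: write `P = ∑_{j=0}^n P_j · y_e^j` with each `P_j` not involving the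
variable `y_e`.  If `P` has the half-plane property, then each `P_j` is identically zero
or has the half-plane property. -/
theorem coefficient_half_plane_property {E : Type*} [Fintype E]
    (P : MvPolynomial E ℂ) (e : E) (n : ℕ) (Pc : ℕ → MvPolynomial E ℂ)
    (hvars : ∀ j : ℕ, (Pc j).degreeOf e = 0)
    (hdecomp : P = ∑ j ∈ Finset.range (n + 1), Pc j * (MvPolynomial.X e) ^ j)
    (hP : HPPpoly P) :
    ∀ j : ℕ, j ≤ n → Pc j = 0 ∨ HPPpoly (Pc j) :=
  coefficient_half_plane_property_general P e n Pc hvars hdecomp hP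
end
end
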